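/- arXiv:2311.06065 — 2 statements merged into one kernel-verified Lean document; each statement's English description precedes it below -/
import Mathlib

section
/- Let e ∈ C[x] be nonzero and M, F, G ∈ C[x]^{r×r} be invertible matrices over C(x) satisfying σ_x((1/e)M)·F = G·(1/e)M. If p is an irreducible factor of det(M) and p does not divide e, then there exist integers m ≥ 1 and n ≥ 0 such that σ_x^m(p) divides det(G) and σ_x^{-n}(p) divides det(F). -/
/-!
Write `T = (1/e) M`, so that `σ(T) F = G T` with `σ` the shift by one. The proof follows the two
properties "`T` is integral at `q`" and "`det T` vanishes at `q`" along the shift orbit of `p`.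
By the gcd hypothesis the first property is the same as `q ∤ e`, and then the second is `q ∣ det M`.

* If `σ(q) ∤ det G`, then `G` is invertible at `σ(q)` and
  `T = G⁻¹ σ(T) F` shows that both properties pass from `q` to `σ(q)` (`step_up`).
* If `q ∤ det F`, then `σ(T) = G T F⁻¹` shows that they pass from `q` to `σ⁻¹(q)` (`step_down`).

If the first (second) claim failed, then all the positive (negative) shifts of `p` would divide
`det M`. This is impossible: in characteristic zero these shifts have infinitely many roots
altogether in an algebraic closure, whereas `det M ≠ 0` (`not_forall_shift_dvd`).
-/

open Polynomial

/-- The shift automorphism of `K[x]` sending `x ↦ x + k`. -/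
noncomputable def shift1 (K : Type*) [Field K] [CharZero K] (k : ℤ) :
    Polynomial K →ₐ[K] Polynomial K :=
  aeval (X + Polynomial.C (k : K))

section Shift

variable {K : Type*} [Field K] [CharZero K]

lemma shift1_shift1 (k l : ℤ) (p : K[X]) : shift1 K k (shift1 K l p) = shift1 K (k + l) p := by
  have h : (shift1 K k).comp (shift1 K l) = shift1 K (k + l) := by
    apply Polynomial.algHom_ext
    simp only [shift1, AlgHom.comp_apply, aeval_X, map_add, aeval_C]
    simp only [algebraMap_eq, Int.cast_add, map_add]
    ring
  exact DFunLike.congr_fun h p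

lemma shift1_zero (p : K[X]) : shift1 K 0 p = p := by
  simp [shift1]

lemma irreducible_shift1 (k : ℤ) {p : K[X]} (hp : Irreducible p) : Irreducible (shift1 K k p) := by
  let φ : K[X] ≃ₐ[K] K[X] := AlgEquiv.ofAlgHom (shift1 K k) (shift1 K (-k))
    (AlgHom.ext fun q => by simp [shift1_shift1, shift1_zero])
    (AlgHom.ext fun q => by simp [shift1_shift1, shift1_zero])
  exact (MulEquiv.irreducible_iff φ).2 hp

lemma shift1_dvd_shift1_iff (k : ℤ) {p q : K[X]} : shift1 K k p ∣ shift1 K k q ↔ p ∣ q := by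
  refine ⟨fun h => ?_, map_dvd _⟩
  simpa [shift1_shift1, shift1_zero] using map_dvd (shift1 K (-k)) h

/-- If `α` is a root of `p` in an algebraic closure, then `α - k` is a root of the shift of `p`
by `k`; a nonzero polynomial cannot have all of these roots for infinitely many `k`. -/
lemma not_forall_shift_dvd {p d : K[X]} (hp : Irreducible p) (hd : d ≠ 0) (f : ℕ → ℤ)
    (hf : Function.Injective f) : ¬ ∀ n, shift1 K (f n) p ∣ d := by
  intro h
  obtain ⟨α, hα⟩ := IsAlgClosed.exists_aeval_eq_zero (AlgebraicClosure K) p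
    (degree_pos_of_irreducible hp).ne'
  have : CharZero (AlgebraicClosure K) := charZero_of_injective_algebraMap
    (algebraMap K (AlgebraicClosure K)).injective
  have hroot : ∀ n, α - (f n : AlgebraicClosure K) ∈ d.rootSet (AlgebraicClosure K) := by
    intro n
    refine (mem_rootSet_of_ne hd).2 (aeval_eq_zero_of_dvd_aeval_eq_zero (h n) ?_)
    have hc : (aeval (α - (f n : AlgebraicClosure K))).comp (shift1 K (f n)) = aeval α := by
      apply Polynomial.algHom_ext
      simp [shift1]
    rw [← AlgHom.comp_apply, hc, hα]
  have hinj : Function.Injective fun n => α - (f n : AlgebraicClosure K) := by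
    intro a b hab
    exact hf (by simpa using hab)
  exact Set.infinite_of_injective_forall_mem hinj hroot (rootSet_finite d _)

end Shift

section Step

variable {K : Type*} [Field K] [CharZero K] {r : ℕ} {e : K[X]}
  {M F G : Matrix (Fin r) (Fin r) K[X]}

lemma det_map_shift1 (k : ℤ) : (M.map (shift1 K k)).det = shift1 K k M.det :=
  (AlgHom.map_det (shift1 K k) M).symm

lemma det_compat (hcompat : e • ((M.map (shift1 K 1)) * F) = (shift1 K 1 e) • (G * M)) :
    e ^ r * (shift1 K 1 M.det * F.det) = (shift1 K 1 e) ^ r * (G.det * M.det) := by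
  have h := congrArg Matrix.det hcompat
  simpa [Matrix.det_smul, Matrix.det_mul, det_map_shift1] using h

/-- Integrality of `(1/e) M` and vanishing of its determinant pass from `q` to its shift,
provided that `G` is invertible there. -/
lemma step_up (hcompat : e • ((M.map (shift1 K 1)) * F) = (shift1 K 1 e) • (G * M))
    (hgcd : ∀ q : K[X], Irreducible q → q ∣ e → ¬ ∀ i j, q ∣ M i j)
    {q : K[X]} (hq : Irreducible q) (hqe : ¬ q ∣ e) (hqM : q ∣ M.det)
    (hqG : ¬ shift1 K 1 q ∣ G.det) :
    ¬ shift1 K 1 q ∣ e ∧ shift1 K 1 q ∣ M.det := by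
  have hq' := (irreducible_shift1 1 hq).prime
  have hqe' : ¬ shift1 K 1 q ∣ shift1 K 1 e := mt (shift1_dvd_shift1_iff 1).1 hqe
  constructor
  · intro hdvd
    refine hgcd _ hq'.irreducible hdvd fun i j => ?_
    have h := congrArg (fun A => (G.adjugate * A) i j) hcompat
    simp only [Matrix.mul_smul, ← Matrix.mul_assoc G.adjugate G, Matrix.adjugate_mul,
      Matrix.smul_mul, Matrix.one_mul, Matrix.smul_apply, smul_eq_mul] at h
    have h' := h ▸ hdvd.mul_right _
    exact ((hq'.dvd_or_dvd h').resolve_left hqe' |> hq'.dvd_or_dvd).resolve_left hqG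
  · have h : shift1 K 1 q ∣ (shift1 K 1 e) ^ r * (G.det * M.det) := by
      rw [← det_compat hcompat]
      exact ((_root_.map_dvd (shift1 K 1) hqM).mul_right _).mul_left _
    exact ((hq'.dvd_or_dvd h).resolve_left (mt hq'.dvd_of_dvd_pow hqe') |>
      hq'.dvd_or_dvd).resolve_left hqG

/-- Integrality of `(1/e) M` and vanishing of its determinant pass from the shift of `q` to `q`,
provided that `F` is invertible at the shift of `q`. -/
lemma step_down (hcompat : e • ((M.map (shift1 K 1)) * F) = (shift1 K 1 e) • (G * M))
    (hgcd : ∀ q : K[X], Irreducible q → q ∣ e → ¬ ∀ i j, q ∣ M i j)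
    {q : K[X]} (hq : Irreducible q) (hqe : ¬ shift1 K 1 q ∣ e) (hqM : shift1 K 1 q ∣ M.det)
    (hqF : ¬ shift1 K 1 q ∣ F.det) :
    ¬ q ∣ e ∧ q ∣ M.det := by
  have hq' := (irreducible_shift1 1 hq).prime
  constructor
  · intro hdvd
    refine hgcd _ hq hdvd fun i j => ?_
    have h := congrArg (fun A => (A * F.adjugate) i j) hcompat
    simp only [Matrix.smul_mul, Matrix.mul_assoc _ F, Matrix.mul_adjugate,
      Matrix.mul_smul, Matrix.mul_one, Matrix.smul_apply, smul_eq_mul, Matrix.map_apply] at h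
    have h' := h.symm ▸ (map_dvd (shift1 K 1) hdvd).mul_right _
    exact (shift1_dvd_shift1_iff 1).1
      (((hq'.dvd_or_dvd h').resolve_left hqe |> hq'.dvd_or_dvd).resolve_left hqF)
  · have h : shift1 K 1 q ∣ e ^ r * (shift1 K 1 M.det * F.det) := by
      rw [det_compat hcompat]
      exact (hqM.mul_left _).mul_left _
    exact (shift1_dvd_shift1_iff 1).1 (((hq'.dvd_or_dvd h).resolve_left
      (mt hq'.dvd_of_dvd_pow hqe) |> hq'.dvd_or_dvd).resolve_right hqF)

end Step

/-- Let `e ∈ K[x]` be nonzero and `M, F, G` matrices over `K[x]`, invertible over `K(x)`,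
with `σ_x((1/e)M)·F = G·(1/e)M` (written denominator-free as
`e • (σ_x(M) * F) = σ_x(e) • (G * M)`), where the gcd of all entries of `M` together with
`e` is `1`.  If `p` is an irreducible factor of `det M` not dividing `e`, then
`σ_x^m(p) ∣ det G` for some `m ≥ 1` and `σ_x^{-n}(p) ∣ det F` for some `n ≥ 0`. -/
theorem division_lemma_factor_of_detM (K : Type*) [Field K] [CharZero K] (r : ℕ)
    (e : Polynomial K) (he : e ≠ 0)
    (M F G : Matrix (Fin r) (Fin r) (Polynomial K))
    (hM : M.det ≠ 0) (hF : F.det ≠ 0) (hG : G.det ≠ 0)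
    (hcompat : e • ((M.map (shift1 K 1)) * F) = (shift1 K 1 e) • (G * M))
    (hgcd : ∀ q : Polynomial K, Irreducible q → q ∣ e → ¬ ∀ i j, q ∣ M i j)
    (p : Polynomial K) (hp : Irreducible p) (hpM : p ∣ M.det) (hpe : ¬ p ∣ e) :
    (∃ m : ℤ, 1 ≤ m ∧ shift1 K m p ∣ G.det) ∧
    (∃ n : ℤ, 0 ≤ n ∧ shift1 K (-n) p ∣ F.det) := by
  constructor
  · by_contra! hno
    have key : ∀ n : ℕ, ¬ shift1 K n p ∣ e ∧ shift1 K n p ∣ M.det := by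
      intro n
      induction n with
      | zero => simpa [shift1_zero] using ⟨hpe, hpM⟩
      | succ n ih =>
        have hs : shift1 K ((n + 1 : ℕ) : ℤ) p = shift1 K 1 (shift1 K n p) := by
          rw [shift1_shift1]; congr 2; push_cast; ring
        rw [hs]
        refine step_up hcompat hgcd (irreducible_shift1 _ hp) ih.1 ih.2 ?_
        rw [← hs]
        exact hno _ (by omega)
    exact not_forall_shift_dvd hp hM (fun n => (n : ℤ)) Nat.cast_injective fun n => (key n).2
  · by_contra! hno
    have key : ∀ n : ℕ, ¬ shift1 K (-n) p ∣ e ∧ shift1 K (-n) p ∣ M.det := by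
      intro n
      induction n with
      | zero => simpa [shift1_zero] using ⟨hpe, hpM⟩
      | succ n ih =>
        have hs : shift1 K (-(n : ℤ)) p = shift1 K 1 (shift1 K (-((n + 1 : ℕ) : ℤ)) p) := by
          rw [shift1_shift1]; congr 2; push_cast; ring
        have hF' := hno n (by omega)
        rw [hs] at ih hF'
        exact step_down hcompat hgcd (irreducible_shift1 _ hp) ih.1 ih.2 hF'
    exact not_forall_shift_dvd hp hM (fun n => -(n : ℤ))
      (fun a b h => by simpa using h) fun n => (key n).2
end

section
/- Let e, e_t ∈ C[t,x] and M, M_t ∈ C[t,x]^{r×r} be invertible over C(t,x) satisfying σ_t((1/e)M)·(1/e_t)M_t = σ_x((1/e_t)M_t)·(1/e)M, with the gcd of all entries of M (resp. M_t) with e (resp. e_t) equal to 1, and suppose gcd(det(M), σ_x^i(e)) = 1 as polynomials in x over C(t) for all nonzero integers i. If q ∈ C[t,x] is an irreducible factor of e_t·det(M_t) with deg_x(q) ≠ 0, then there exists an integer k such that σ_x^k(q) divides e·det(M). -/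
/-!
Write `s k = σ_x^k q`, and suppose that no `s k` divides `e · det M`. Reading the compatibility
condition modulo the prime `s k`, where `M` is invertible, links the behaviour of `(1/e_t) M_t` at
`s (k - 1)` and at `s k`:

* if `s k ∤ σ_t e`, then `s (k - 1) ∣ e_t` implies `s k ∣ e_t`;
* if `s k ∤ σ_t (det M)`, then `s k ∣ e_t` implies `s (k - 1) ∣ e_t`.

By shift-freeness, an index where the first rule is blocked and one where the second is blocked
must coincide, so from any index with `s a ∣ e_t` divisibility propagates without end either
upwards or downwards. But a nonzero polynomial is divisible by only finitely many `s k`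
(`finite_shift_dvd`): a root `α` of `q` in the algebraic closure of `K(t)` would give
infinitely many roots `α - k`. Hence no `s k` divides `e_t`. Taking determinants in the
compatibility condition then gives the same two rules, with the roles of `σ_t e` and `σ_t (det M)`
exchanged, for divisibility of `det M_t`, so no `s k` divides `det M_t` either.
-/

open MvPolynomial

/-- The shift automorphism of `K[t,x]` sending `t ↦ t + a`, `x ↦ x + b`
(variable `0` is `t`, variable `1` is `x`). -/
noncomputable def shift2 (K : Type*) [Field K] [CharZero K] (a b : ℤ) :
    MvPolynomial (Fin 2) K →ₐ[K] MvPolynomial (Fin 2) K :=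
  aeval (fun i => X i + MvPolynomial.C (if i = 0 then (a : K) else (b : K)))

section Shift

variable {K : Type*} [Field K]

/-- `K[t,x]` viewed as `K[t][x]`. -/
noncomputable def toPolyX (K : Type*) [Field K] :
    MvPolynomial (Fin 2) K ≃ₐ[K] Polynomial (MvPolynomial (Fin 1) K) :=
  (renameEquiv K (Equiv.swap 0 1)).trans (finSuccEquiv K 1)

lemma toPolyX_natDegree (p : MvPolynomial (Fin 2) K) :
    (toPolyX K p).natDegree = degreeOf 1 p := by
  have := degreeOf_rename_of_injective (p := p) (Equiv.swap (0 : Fin 2) 1).injective 1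
  simpa [toPolyX, natDegree_finSuccEquiv] using this

lemma toPolyX_X_zero : toPolyX K (X 0) = Polynomial.C (X 0) := by
  simpa [toPolyX] using finSuccEquiv_X_succ (R := K) (j := (0 : Fin 1))

lemma toPolyX_X_one : toPolyX K (X 1) = Polynomial.X := by
  simpa [toPolyX] using finSuccEquiv_X_zero (R := K) (n := 1)

lemma toPolyX_C (c : K) : toPolyX K (C c) = Polynomial.C (C c) := by
  simp [toPolyX, finSuccEquiv_apply]

/-- The substitution `t ↦ t + a` on `K[t]`. -/
noncomputable def tShift (K : Type*) [Field K] (a : ℤ) :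
    MvPolynomial (Fin 1) K →+* MvPolynomial (Fin 1) K :=
  eval₂Hom C (fun i => X i + C (a : K))

lemma tShift_C (a : ℤ) (c : K) : tShift K a (C c) = C c :=
  eval₂Hom_C _ _ c

lemma tShift_X (a : ℤ) (i : Fin 1) : tShift K a (X i) = X i + C (a : K) :=
  eval₂Hom_X' _ _ i

variable [CharZero K]

lemma shift2_X_zero (a b : ℤ) : shift2 K a b (X 0) = X 0 + C (a : K) := by
  rw [shift2, aeval_X, if_pos rfl]

lemma shift2_X_one (a b : ℤ) : shift2 K a b (X 1) = X 1 + C (b : K) := by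
  rw [shift2, aeval_X, if_neg one_ne_zero]

lemma shift2_C (a b : ℤ) (c : K) : shift2 K a b (C c) = C c :=
  aeval_C _ c

lemma shift2_shift2 (a b c d : ℤ) (p : MvPolynomial (Fin 2) K) :
    shift2 K a b (shift2 K c d p) = shift2 K (a + c) (b + d) p := by
  have : (shift2 K a b).comp (shift2 K c d) = shift2 K (a + c) (b + d) := by
    ext i : 1
    obtain rfl | rfl : i = 0 ∨ i = 1 := by omega
    · simp only [AlgHom.comp_apply, map_add, shift2_X_zero, shift2_C, Int.cast_add, add_assoc]
    · simp only [AlgHom.comp_apply, map_add, shift2_X_one, shift2_C, Int.cast_add, add_assoc]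
  exact DFunLike.congr_fun this p

lemma shift2_zero (p : MvPolynomial (Fin 2) K) : shift2 K 0 0 p = p := by
  have : shift2 K 0 0 = AlgHom.id K _ := by
    ext i : 1
    fin_cases i <;> simp [shift2]
  exact DFunLike.congr_fun this p

/-- The shift as an automorphism, with inverse the opposite shift. -/
noncomputable def shiftEquiv (K : Type*) [Field K] [CharZero K] (a b : ℤ) :
    MvPolynomial (Fin 2) K ≃ₐ[K] MvPolynomial (Fin 2) K :=
  AlgEquiv.ofAlgHom (shift2 K a b) (shift2 K (-a) (-b))
    (by ext1 i; simp [shift2_shift2, shift2_zero])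
    (by ext1 i; simp [shift2_shift2, shift2_zero])

lemma shift2_irreducible (a b : ℤ) {p : MvPolynomial (Fin 2) K} (hp : Irreducible p) :
    Irreducible (shift2 K a b p) :=
  (MulEquiv.irreducible_iff (shiftEquiv K a b)).2 hp

lemma shift2_dvd_shift2 (a b : ℤ) {p f : MvPolynomial (Fin 2) K} :
    shift2 K a b p ∣ shift2 K a b f ↔ p ∣ f :=
  map_dvd_iff (shiftEquiv K a b)

lemma shift2_dvd_iff (a b : ℤ) {p f : MvPolynomial (Fin 2) K} :
    p ∣ shift2 K a b f ↔ shift2 K (-a) (-b) p ∣ f := by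
  rw [← shift2_dvd_shift2 a b (f := f)]
  simp [shift2_shift2, shift2_zero]

/-- On `K[t][x]`, a shift acts as `t ↦ t + a` on the coefficients followed by substituting `x + b`
for `x`. -/
lemma toPolyX_shift2 (a b : ℤ) (p : MvPolynomial (Fin 2) K) :
    toPolyX K (shift2 K a b p) =
      ((toPolyX K p).map (tShift K a)).comp
          (Polynomial.X + Polynomial.C (C (b : K))) := by
  induction p using MvPolynomial.induction_on with
  | C c =>
    rw [shift2_C, toPolyX_C, Polynomial.map_C, tShift_C, Polynomial.C_comp]
  | add p q hp hq => simp only [map_add, hp, hq, Polynomial.map_add, Polynomial.add_comp]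
  | mul_X p i hp =>
    rw [map_mul, map_mul, hp, map_mul, Polynomial.map_mul, Polynomial.mul_comp]
    refine congrArg (HMul.hMul _) ?_
    obtain rfl | rfl : i = 0 ∨ i = 1 := by omega
    · rw [shift2_X_zero, map_add, toPolyX_X_zero, toPolyX_C, Polynomial.map_C, tShift_X,
        Polynomial.C_comp, Polynomial.C_add]
    · rw [shift2_X_one, map_add, toPolyX_X_one, toPolyX_C, Polynomial.map_X, Polynomial.X_comp]

lemma degreeOf_shift2_le (a b : ℤ) (p : MvPolynomial (Fin 2) K) :
    degreeOf 1 (shift2 K a b p) ≤ degreeOf 1 p := by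
  rw [← toPolyX_natDegree, ← toPolyX_natDegree, toPolyX_shift2, Polynomial.natDegree_comp,
    Polynomial.natDegree_X_add_C, mul_one]
  exact Polynomial.natDegree_map_le

lemma degreeOf_shift2_ne_zero (a b : ℤ) {p : MvPolynomial (Fin 2) K} (hp : degreeOf 1 p ≠ 0) :
    degreeOf 1 (shift2 K a b p) ≠ 0 := by
  intro h
  have := degreeOf_shift2_le (-a) (-b) (shift2 K a b p)
  rw [shift2_shift2] at this
  simp only [neg_add_cancel, shift2_zero] at this
  omega

/-- A nonzero polynomial is divisible by only finitely many `x`-shifts of a polynomial of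
positive `x`-degree. -/
lemma finite_shift_dvd {q f : MvPolynomial (Fin 2) K} (hq : degreeOf 1 q ≠ 0) (hf : f ≠ 0) :
    {k : ℤ | shift2 K 0 k q ∣ f}.Finite := by
  let R := MvPolynomial (Fin 1) K
  let L := AlgebraicClosure (FractionRing R)
  have hinj : Function.Injective (algebraMap R L) := by
    rw [IsScalarTower.algebraMap_eq R (FractionRing R) L]
    exact (algebraMap (FractionRing R) L).injective.comp (IsFractionRing.injective R _)
  have : CharZero R := charZero_of_injective_algebraMap (C_injective (Fin 1) K)
  have : CharZero L := charZero_of_injective_algebraMap hinj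
  have hdeg : ((toPolyX K q).map (algebraMap R L)).degree ≠ 0 := by
    rw [Polynomial.degree_map_eq_of_injective hinj]
    intro h
    exact hq (by rw [← toPolyX_natDegree, Polynomial.natDegree_eq_zero_iff_degree_le_zero.2 h.le])
  obtain ⟨α, hα⟩ := IsAlgClosed.exists_root _ hdeg
  have hf' : (toPolyX K f).map (algebraMap R L) ≠ 0 := by
    rw [Ne, Polynomial.map_eq_zero_iff hinj]
    simpa using hf
  refine Set.Finite.of_finite_image (f := fun k : ℤ => α - k) ?_ ?_
  · refine (Polynomial.finite_setOfPred_isRoot hf').subset ?_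
    rintro _ ⟨k, hk, rfl⟩
    have h1 : toPolyX K (shift2 K 0 k q) ∣ toPolyX K f := map_dvd _ hk
    rw [toPolyX_shift2] at h1
    have h2 := Polynomial.map_dvd (algebraMap R L) h1
    refine Polynomial.IsRoot.dvd ?_ h2
    have h3 : tShift K 0 = RingHom.id _ := by
      ext i : 2
      · simp [tShift_C]
      · simp [tShift]
    rw [h3]
    simpa [Polynomial.map_comp, Polynomial.eval_comp, Polynomial.IsRoot] using hα
  · intro k _ l _ h
    simpa using h

end Shift

/-- A finite set of integers that is closed under upward steps outside `E` and downward steps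
outside `D` is empty, provided that any element of `D` equals any element of `E`. -/
lemma not_mem_of_propagate {P E D : ℤ → Prop} (hfin : {k | P k}.Finite)
    (hDE : ∀ a b, D a → E b → a = b)
    (hup : ∀ k, ¬ E k → P (k - 1) → P k) (hdown : ∀ k, ¬ D k → P k → P (k - 1)) (a : ℤ) :
    ¬ P a := by
  intro ha
  by_cases h : ∃ b, a < b ∧ E b
  · obtain ⟨b, hab, hb⟩ := h
    have key : ∀ n : ℕ, P (a - n) := by
      intro n
      induction n with
      | zero => simpa using ha
      | succ n ih =>
        have := hdown _ (fun hD => by have := hDE _ _ hD hb; omega) ih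
        rwa [show a - ((n + 1 : ℕ) : ℤ) = a - n - 1 by push_cast; ring]
    exact Set.infinite_of_injective_forall_mem (f := fun n : ℕ => a - n)
      (fun m n h => by simpa using h) key hfin
  · push Not at h
    have key : ∀ n : ℕ, P (a + n) := by
      intro n
      induction n with
      | zero => simpa using ha
      | succ n ih =>
        refine hup _ (h _ (by omega)) ?_
        rwa [show a + ((n + 1 : ℕ) : ℤ) - 1 = a + n by push_cast; ring]
    exact Set.infinite_of_injective_forall_mem (f := fun n : ℕ => a + n)
      (fun m n h => by simpa using h) key hfin

/-- A matrix that vanishes modulo a prime after multiplication on the right by a matrix invertible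
modulo that prime already vanishes modulo it. -/
lemma dvd_of_dvd_mul_right {R n : Type*} [CommRing R] [Fintype n] [DecidableEq n] {s : R}
    (hs : Prime s) {A B : Matrix n n R} (hB : ¬ s ∣ B.det) (h : ∀ i j, s ∣ (A * B) i j) (i j : n) :
    s ∣ A i j := by
  have h1 : (A * B * B.adjugate) i j = B.det * A i j := by
    rw [Matrix.mul_assoc, Matrix.mul_adjugate]; simp
  have h2 : s ∣ (A * B * B.adjugate) i j := by
    rw [Matrix.mul_apply]
    exact Finset.dvd_sum fun k _ => (h i k).mul_right _
  rw [h1] at h2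
  exact (hs.dvd_or_dvd h2).resolve_left hB

lemma dvd_of_dvd_mul_left {R n : Type*} [CommRing R] [Fintype n] [DecidableEq n] {s : R}
    (hs : Prime s) {A B : Matrix n n R} (hA : ¬ s ∣ A.det) (h : ∀ i j, s ∣ (A * B) i j) (i j : n) :
    s ∣ B i j := by
  refine dvd_of_dvd_mul_right (A := B.transpose) (B := A.transpose) hs
    (by rwa [Matrix.det_transpose]) (fun i j => ?_) j i
  rw [← Matrix.transpose_mul]
  exact h j i

/-- Let `e, e_t ∈ K[t,x]` and `M, M_t` matrices over `K[t,x]`, invertible over `K(t,x)`,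
satisfying the compatibility condition `σ_t((1/e)M)·(1/e_t)M_t = σ_x((1/e_t)M_t)·(1/e)M`
(written denominator-free), with gcd of the entries of `M` (resp. `M_t`) together with `e`
(resp. `e_t`) equal to `1`, and `gcd(det M, σ_x^i(e)) = 1` in `K(t)[x]` for all nonzero
`i ∈ ℤ` (i.e. they share no common irreducible factor of positive `x`-degree).
If `q` is an irreducible factor of `e_t·det M_t` with `deg_x(q) ≠ 0`, then
`σ_x^k(q) ∣ e·det M` for some `k ∈ ℤ`. -/
theorem compat_transport_x (K : Type*) [Field K] [CharZero K] (r : ℕ)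
    (e et : MvPolynomial (Fin 2) K) (he : e ≠ 0) (het : et ≠ 0)
    (M Mt : Matrix (Fin r) (Fin r) (MvPolynomial (Fin 2) K))
    (hM : M.det ≠ 0) (hMt : Mt.det ≠ 0)
    (hcompat : (shift2 K 0 1 et * e) • ((M.map (shift2 K 1 0)) * Mt)
             = (shift2 K 1 0 e * et) • ((Mt.map (shift2 K 0 1)) * M))
    (hgcdM : ∀ q : MvPolynomial (Fin 2) K, Irreducible q → q ∣ e → ¬ ∀ i j, q ∣ M i j)
    (hgcdMt : ∀ q : MvPolynomial (Fin 2) K, Irreducible q → q ∣ et → ¬ ∀ i j, q ∣ Mt i j)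
    (hshiftfree : ∀ i : ℤ, i ≠ 0 →
      ∀ q : MvPolynomial (Fin 2) K, Irreducible q → degreeOf 1 q ≠ 0 →
        q ∣ M.det → ¬ q ∣ shift2 K 0 i e)
    (q : MvPolynomial (Fin 2) K) (hq : Irreducible q)
    (hqdvd : q ∣ et * Mt.det) (hqx : degreeOf 1 q ≠ 0) :
    ∃ k : ℤ, shift2 K 0 k q ∣ e * M.det := by
  by_contra! hno
  have hsirr (k : ℤ) : Irreducible (shift2 K 0 k q) := shift2_irreducible 0 k hq
  have hsp (k : ℤ) : Prime (shift2 K 0 k q) := (hsirr k).prime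
  have hse (k : ℤ) : ¬ shift2 K 0 k q ∣ e := fun h => hno k (h.mul_right _)
  have hsM (k : ℤ) : ¬ shift2 K 0 k q ∣ M.det := fun h => hno k (h.mul_left _)
  have hstep (k : ℤ) (f : MvPolynomial (Fin 2) K) :
      shift2 K 0 k q ∣ shift2 K 0 1 f ↔ shift2 K 0 (k - 1) q ∣ f := by
    rw [shift2_dvd_iff, shift2_shift2]
    simp only [neg_zero, add_zero, neg_add_eq_sub]
  have hmapdet (a b : ℤ) (N : Matrix (Fin r) (Fin r) (MvPolynomial (Fin 2) K)) :
      (N.map (shift2 K a b)).det = shift2 K a b N.det :=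
    ((shift2 K a b).map_det N).symm
  -- Both shifts are undone, in order to apply
  -- shift-freeness to the irreducible polynomial `σ_t⁻¹ σ_x^a q`.
  have hDE : ∀ a b : ℤ, shift2 K 0 a q ∣ shift2 K 1 0 M.det →
      shift2 K 0 b q ∣ shift2 K 1 0 e → a = b := by
    intro a b ha hb
    by_contra hab
    rw [shift2_dvd_iff, shift2_shift2] at ha hb
    refine hshiftfree (a - b) (sub_ne_zero.2 hab) _ (shift2_irreducible _ _ hq)
      (degreeOf_shift2_ne_zero _ _ hqx) ha ?_
    rw [shift2_dvd_iff, shift2_shift2]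
    convert hb using 3 <;> ring
  have hent (i j : Fin r) :
      shift2 K 0 1 et * e * (M.map (shift2 K 1 0) * Mt) i j =
        shift2 K 1 0 e * et * (Mt.map (shift2 K 0 1) * M) i j := by
    simpa only [Matrix.smul_apply, smul_eq_mul] using congrFun (congrFun hcompat i) j
  have het' : ∀ k : ℤ, ¬ shift2 K 0 k q ∣ et := by
    refine not_mem_of_propagate (E := fun k => shift2 K 0 k q ∣ shift2 K 1 0 e)
      (D := fun k => shift2 K 0 k q ∣ shift2 K 1 0 M.det) (finite_shift_dvd hqx het) hDE ?_ ?_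
    · intro k hE hk
      by_contra hk'
      refine hgcdMt _ (hsirr (k - 1)) hk fun i j => (hstep k _).1 ?_
      refine dvd_of_dvd_mul_right (A := Mt.map (shift2 K 0 1)) (hsp k) (hsM k) (fun i j => ?_) i j
      have h : shift2 K 0 k q ∣ shift2 K 0 1 et * e * (M.map (shift2 K 1 0) * Mt) i j :=
        (((hstep k et).2 hk).mul_right _).mul_right _
      rw [hent] at h
      exact ((hsp k).dvd_or_dvd h).resolve_left fun h => ((hsp k).dvd_or_dvd h).elim hE hk'
    · intro k hD hk
      by_contra hk'
      refine hgcdMt _ (hsirr k) hk fun i j => ?_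
      refine dvd_of_dvd_mul_left (hsp k) (A := M.map (shift2 K 1 0)) (by rwa [hmapdet])
        (fun i j => ?_) i j
      have h : shift2 K 0 k q ∣ shift2 K 1 0 e * et * (Mt.map (shift2 K 0 1) * M) i j :=
        (hk.mul_left _).mul_right _
      rw [← hent] at h
      exact ((hsp k).dvd_or_dvd h).resolve_left fun h => ((hsp k).dvd_or_dvd h).elim
        (fun h => hk' ((hstep k et).1 h)) (hse k)
  have hdet : (shift2 K 0 1 et * e) ^ r * (shift2 K 1 0 M.det * Mt.det) =
      (shift2 K 1 0 e * et) ^ r * (shift2 K 0 1 Mt.det * M.det) := by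
    simpa [Matrix.det_smul, hmapdet] using congrArg Matrix.det hcompat
  have hMt' : ∀ k : ℤ, ¬ shift2 K 0 k q ∣ Mt.det := by
    refine not_mem_of_propagate (E := fun k => shift2 K 0 k q ∣ shift2 K 1 0 M.det)
      (D := fun k => shift2 K 0 k q ∣ shift2 K 1 0 e) (finite_shift_dvd hqx hMt)
      (fun a b ha hb => (hDE b a hb ha).symm) ?_ ?_
    · intro k hE hk
      have h : shift2 K 0 k q ∣ (shift2 K 1 0 e * et) ^ r * (shift2 K 0 1 Mt.det * M.det) :=
        (((hstep k _).2 hk).mul_right _).mul_left _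
      rw [← hdet] at h
      refine (((hsp k).dvd_or_dvd h).resolve_left fun h => ?_) |> fun h =>
        ((hsp k).dvd_or_dvd h).resolve_left hE
      exact ((hsp k).dvd_or_dvd ((hsp k).dvd_of_dvd_pow h)).elim
        (fun h => het' (k - 1) ((hstep k et).1 h)) (hse k)
    · intro k hD hk
      have h : shift2 K 0 k q ∣ (shift2 K 0 1 et * e) ^ r * (shift2 K 1 0 M.det * Mt.det) :=
        (hk.mul_left _).mul_left _
      rw [hdet] at h
      refine (((hsp k).dvd_or_dvd h).resolve_left fun h => ?_) |> fun h =>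
        (hstep k _).1 (((hsp k).dvd_or_dvd h).resolve_right (hsM k))
      exact ((hsp k).dvd_or_dvd ((hsp k).dvd_of_dvd_pow h)).elim hD (het' k)
  rcases hq.prime.dvd_or_dvd hqdvd with h | h
  · exact het' 0 (by rwa [shift2_zero])
  · exact hMt' 0 (by rwa [shift2_zero])
end
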